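/- arXiv:1406.2722 — 2 statements merged into one kernel-verified Lean document; each statement's English description precedes it below -/
import Mathlib

section
/- Let A be a square matrix over a commutative ring indexed by Fin n ⊕ Fin m. Then for every k and all finsets S, T ⊆ Fin n with S.card = T.card = k, one has ∑_{W ⊆ Fin m} (−1)^{W.card} · det A[Ŝ ∪ Ŵ, T̂ ∪ Ŵ] = ∑_{(R₁,R₂)} ε(R₁,R₂) · det A[R₁, T̂] · det (1−A)[R₂, M̂], where the right-hand sum ranges over all pairs of disjoint finsets R₁, R₂ of Fin n ⊕ Fin m with R₁ ∪ R₂ = Ŝ ∪ M̂ and R₁.card = k. (This expresses the partial supertrace of the exterior algebra action of A over the right block as a contraction against the top form transported by 1−A.) -/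
open Matrix

/-- Determinant of the submatrix of `A` with rows indexed by the elements of `S` and
columns indexed by the elements of `T`, each listed in increasing order.
Defined to be `0` if the cardinalities of `S` and `T` differ
(the empty determinant is `1`). -/
noncomputable def fminor {ι R : Type*} [LinearOrder ι] [CommRing R]
    (A : Matrix ι ι R) (S T : Finset ι) : R :=
  if h : S.card = T.card then
    (Matrix.of fun i j : Fin T.card =>
      A (S.orderEmbOfFin h i) (T.orderEmbOfFin rfl j)).det
  else 0

/-- `Fin n ⊕ Fin m` linearly ordered so that every element of the left summand precedes
every element of the right summand, each summand with its natural order. -/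
abbrev SumLexIdx (n m : ℕ) := Lex (Fin n ⊕ Fin m)

/-- Inclusion of `Fin n` as the left block. -/
def inlL {n m : ℕ} (i : Fin n) : SumLexIdx n m := toLex (Sum.inl i)

/-- Inclusion of `Fin m` as the right block. -/
def inrL {n m : ℕ} (j : Fin m) : SumLexIdx n m := toLex (Sum.inr j)

/-- View a matrix indexed by `Fin n ⊕ Fin m` as a matrix indexed by the linearly
ordered index type `SumLexIdx n m`. -/
def toLexMat {n m : ℕ} {R : Type*} (A : Matrix (Fin n ⊕ Fin m) (Fin n ⊕ Fin m) R) :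
    Matrix (SumLexIdx n m) (SumLexIdx n m) R := fun i j => A (ofLex i) (ofLex j)

/-- For disjoint finsets `R₁, R₂`, the sign `ε(R₁,R₂) = (-1)^c` where `c` is the
number of pairs `(a,b) ∈ R₁ × R₂` with `b < a`. -/
noncomputable def epsSign {ι : Type*} [LinearOrder ι] (R : Type*) [CommRing R]
    (R₁ R₂ : Finset ι) : R :=
  (-1) ^ ((R₁ ×ˢ R₂).filter (fun ab => ab.2 < ab.1)).card

/-!
Let `D` be `A` with the columns in the block `M` replaced by those of `1 - A`. Up to a common
sign, both sides of the identity compute the minor of `D` with rows `S ∪ M` and columns `T ∪ M`.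
Splitting every column in `M` into a unit column and a column of `-A` turns it into an alternating
sum of minors of `A`, one for each set `W ⊆ M` of columns where `-A` is chosen; Laplace expansion
along the columns in `T` turns it into the contraction of minors of `A` against minors of `1 - A`.
-/

section Minors

variable {ι R : Type*} [LinearOrder ι] [CommRing R]

lemma fminor_of_card_ne (A : Matrix ι ι R) {S T : Finset ι} (h : S.card ≠ T.card) :
    fminor A S T = 0 :=
  dif_neg h

lemma fminor_eq_det_orderEmbOfFin (A : Matrix ι ι R) {S T : Finset ι} {k : ℕ}
    (hS : S.card = k) (hT : T.card = k) :
    fminor A S T = (A.submatrix (S.orderEmbOfFin hS) (T.orderEmbOfFin hT)).det := by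
  subst hT
  exact dif_pos hS

lemma fminor_congr {A B : Matrix ι ι R} {S T : Finset ι} (h : ∀ i ∈ S, ∀ j ∈ T, A i j = B i j) :
    fminor A S T = fminor B S T := by
  by_cases hST : S.card = T.card
  · simp only [fminor_eq_det_orderEmbOfFin _ hST rfl]
    congr 1
    ext i j
    exact h _ (S.orderEmbOfFin_mem hST i) _ (T.orderEmbOfFin_mem rfl j)
  · simp only [fminor_of_card_ne _ hST]

lemma epsSign_eq_prod (P Q : Finset ι) :
    epsSign R P Q = ∏ a ∈ P, ∏ b ∈ Q, if b < a then (-1 : R) else 1 := by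
  rw [epsSign, ← Finset.prod_product', Finset.prod_ite, Finset.prod_const, Finset.prod_const_one,
    mul_one]

lemma epsSign_mul_self (P Q : Finset ι) : epsSign R P Q * epsSign R P Q = 1 := by
  rw [epsSign, ← mul_pow, neg_one_mul, neg_neg, one_pow]

lemma epsSign_eq_one {P Q : Finset ι} (h : ∀ a ∈ P, ∀ b ∈ Q, a < b) : epsSign R P Q = 1 := by
  rw [epsSign_eq_prod]
  exact Finset.prod_eq_one fun a ha => Finset.prod_eq_one fun b hb => if_neg (h a ha b hb).asymm

/-- The sign `(-1) ^ c` of a listing `f`, where `c` is the number of its inversions, i.e. of pairs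
`i < j` with `f j < f i` (for `f` injective). It is the sign of the permutation sorting `f`. -/
def inversionSign (R : Type*) [CommRing R] {n : ℕ} (f : Fin n → ι) : R :=
  ∏ i, ∏ j ∈ Finset.Ioi i, if f i < f j then 1 else -1

lemma strictMono_comp_sort {n : ℕ} {f : Fin n → ι} (hf : Function.Injective f) :
    StrictMono (f ∘ Tuple.sort f) :=
  (Tuple.monotone_sort f).strictMono_of_injective (hf.comp (Tuple.sort f).injective)

lemma sign_sort {n : ℕ} {f : Fin n → ι} (hf : Function.Injective f) :
    ((Equiv.Perm.sign (Tuple.sort f) : ℤ) : R) = inversionSign R f := by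
  have lt_iff (i j : Fin n) : (Tuple.sort f)⁻¹ i < (Tuple.sort f)⁻¹ j ↔ f i < f j := by
    rw [← (strictMono_comp_sort hf).lt_iff_lt]
    simp
  rw [← Equiv.Perm.sign_inv, Equiv.Perm.sign_eq_prod_prod_Ioi, inversionSign]
  simp only [lt_iff, Units.coe_prod, Int.cast_prod, apply_ite Units.val,
    apply_ite (Int.cast (R := R)), Units.val_one, Units.val_neg, Int.cast_one, Int.cast_neg]

lemma fminor_image_univ (A : Matrix ι ι R) {n : ℕ} {f g : Fin n → ι}
    (hf : StrictMono f) (hg : StrictMono g) :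
    fminor A (Finset.univ.image f) (Finset.univ.image g) = (A.submatrix f g).det := by
  have card_eq {f : Fin n → ι} (hf : StrictMono f) : (Finset.univ.image f).card = n := by
    rw [Finset.card_image_of_injective _ hf.injective, Finset.card_univ, Fintype.card_fin]
  have enum_eq {f : Fin n → ι} (hf : StrictMono f) :
      f = (Finset.univ.image f).orderEmbOfFin (card_eq hf) :=
    Finset.orderEmbOfFin_unique _ (fun i => Finset.mem_image_of_mem f (Finset.mem_univ i)) hf
  rw [fminor_eq_det_orderEmbOfFin A (card_eq hf) (card_eq hg), ← enum_eq hf, ← enum_eq hg]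

lemma det_submatrix_eq_inversionSign_mul_fminor (A : Matrix ι ι R) {n : ℕ} {f g : Fin n → ι}
    (hf : Function.Injective f) (hg : Function.Injective g) :
    (A.submatrix f g).det = inversionSign R f * inversionSign R g *
      fminor A (Finset.univ.image f) (Finset.univ.image g) := by
  have image_sort (f : Fin n → ι) :
      Finset.univ.image f = Finset.univ.image (f ∘ Tuple.sort f) := by
    rw [← Finset.image_image, Finset.image_univ_equiv]
  have submatrix_eq : A.submatrix f g =
      ((A.submatrix (f ∘ Tuple.sort f) (g ∘ Tuple.sort g)).submatrix
        ⇑(Tuple.sort f)⁻¹ id).submatrix id ⇑(Tuple.sort g)⁻¹ := by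
    ext i j
    simp
  rw [submatrix_eq, Matrix.det_permute', Matrix.det_permute, Equiv.Perm.sign_inv,
    Equiv.Perm.sign_inv, sign_sort hf, sign_sort hg, image_sort f, image_sort g,
    fminor_image_univ A (strictMono_comp_sort hf) (strictMono_comp_sort hg)]
  ring

lemma inversionSign_append {k l : ℕ} (a : Fin k ↪o ι) (b : Fin l ↪o ι)
    (hab : ∀ i j, a i ≠ b j) :
    inversionSign R (Fin.append a b) =
      epsSign R (Finset.univ.image a) (Finset.univ.image b) := by
  have ite_lt {N : ℕ} (x y : Fin N) :
      (if x < y then if x < y then (1 : R) else -1 else 1) = 1 := by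
    split_ifs <;> rfl
  have left_lt_right (x : Fin k) (y : Fin l) : Fin.castAdd l x < Fin.natAdd k y :=
    Fin.lt_def.mpr (x.isLt.trans_le (Nat.le_add_right k y))
  have castAdd_lt_iff (x y : Fin k) : Fin.castAdd l x < Fin.castAdd l y ↔ x < y :=
    (Fin.strictMono_castAdd l).lt_iff_lt
  have Ioi_eq (i : Fin (k + l)) : Finset.Ioi i = Finset.univ.filter (i < ·) := by
    ext; simp
  have lt_iff (x : Fin k) (y : Fin l) : a x < b y ↔ ¬ b y < a x :=
    ⟨fun h => h.asymm, fun h => (not_lt.mp h).lt_of_ne (hab x y)⟩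
  rw [epsSign_eq_prod, Finset.prod_image a.injective.injOn, inversionSign]
  simp only [Ioi_eq, Finset.prod_filter, Fin.prod_univ_add, Fin.append_left, Fin.append_right,
    left_lt_right, (left_lt_right _ _).asymm, castAdd_lt_iff,
    Fin.natAdd_lt_natAdd_iff, OrderEmbedding.lt_iff_lt, ite_lt, if_true, if_false,
    Finset.prod_const_one, one_mul, mul_one, Finset.prod_image b.injective.injOn, lt_iff, ite_not]

lemma det_submatrix_sumElim_eq_epsSign_mul_fminor (A : Matrix ι ι R) {k l : ℕ}
    (a a' : Fin k ↪o ι) (b b' : Fin l ↪o ι) (hab : ∀ i j, a i ≠ b j) (hab' : ∀ i j, a' i ≠ b' j) :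
    (A.submatrix (Sum.elim a b) (Sum.elim a' b')).det =
      epsSign R (Finset.univ.image a) (Finset.univ.image b) *
        epsSign R (Finset.univ.image a') (Finset.univ.image b') *
        fminor A (Finset.univ.image a ∪ Finset.univ.image b)
          (Finset.univ.image a' ∪ Finset.univ.image b') := by
  have image_append (f : Fin k → ι) (g : Fin l → ι) :
      Finset.univ.image (Fin.append f g) = Finset.univ.image f ∪ Finset.univ.image g := by
    ext x
    simp only [Finset.mem_image, Finset.mem_univ, true_and, Finset.mem_union,
      finSumFinEquiv.surjective.exists, Sum.exists, finSumFinEquiv_apply_left,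
      finSumFinEquiv_apply_right, Fin.append_left, Fin.append_right]
  have submatrix_eq : A.submatrix (Sum.elim a b) (Sum.elim a' b') =
      (A.submatrix (Fin.append a b) (Fin.append a' b')).submatrix
        finSumFinEquiv finSumFinEquiv := by
    ext (i | i) (j | j) <;> simp
  rw [submatrix_eq, Matrix.det_submatrix_equiv_self,
    det_submatrix_eq_inversionSign_mul_fminor A
      (Fin.append_injective_iff.mpr ⟨a.injective, b.injective, hab⟩)
      (Fin.append_injective_iff.mpr ⟨a'.injective, b'.injective, hab'⟩),
    inversionSign_append a b hab, inversionSign_append a' b' hab', image_append, image_append]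

end Minors

section Laplace

variable {ι R : Type*} [LinearOrder ι] [CommRing R]

lemma sum_powerset_image {α β N : Type*} [DecidableEq β] [AddCommMonoid N]
    {f : α → β} (hf : Function.Injective f) (s : Finset α) (g : Finset β → N) :
    ∑ t ∈ (s.image f).powerset, g t = ∑ t ∈ s.powerset, g (t.image f) := by
  classical
  rw [Finset.powerset_image, Finset.sum_image (Finset.image_injective hf).injOn]

/-- The part of `A` supported on the two diagonal blocks `P × T` and `Pᶜ × Tᶜ`. Its minors are
the terms of the Laplace expansion along the columns `T` in which these columns use the rows `P`. -/
def blockDiagPart (A : Matrix ι ι R) (P T : Finset ι) : Matrix ι ι R :=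
  Matrix.of fun i j => if i ∈ P ↔ j ∈ T then A i j else 0

lemma fminor_eq_sum_blockDiagPart (A : Matrix ι ι R) {U V : Finset ι} (h : U.card = V.card)
    (T : Finset ι) :
    fminor A U V = ∑ P ∈ U.powerset, fminor (blockDiagPart A P T) U V := by
  let r := U.orderEmbOfFin h
  let c := V.orderEmbOfFin rfl
  let a : Fin V.card → Fin V.card → R := fun i j => if c j ∈ T then A (r i) (c j) else 0
  let b : Fin V.card → Fin V.card → R := fun i j => if c j ∈ T then 0 else A (r i) (c j)
  have add_eq : A.submatrix r c = a + b := by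
    ext i j
    by_cases hj : c j ∈ T <;> simp [a, b, hj]
  have piecewise_eq (s : Finset (Fin V.card)) :
      s.piecewise a b = (blockDiagPart A (s.image r) T).submatrix r c := by
    ext i j
    by_cases hi : i ∈ s <;> by_cases hj : c j ∈ T <;>
      simp [a, b, blockDiagPart, Finset.piecewise, hi, hj, r.injective.eq_iff]
  calc fminor A U V
      = Matrix.detRowAlternating (a + b) := by
        rw [fminor_eq_det_orderEmbOfFin A h rfl, ← add_eq]
        rfl
    _ = ∑ s : Finset (Fin V.card), Matrix.detRowAlternating (s.piecewise a b) :=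
      Matrix.detRowAlternating.map_add_univ a b
    _ = ∑ s : Finset (Fin V.card), fminor (blockDiagPart A (s.image r) T) U V := by
      simp only [piecewise_eq, fminor_eq_det_orderEmbOfFin _ h rfl]
      rfl
    _ = ∑ P ∈ U.powerset, fminor (blockDiagPart A P T) U V := by
      rw [← Finset.powerset_univ, ← sum_powerset_image r.injective Finset.univ
        fun P => fminor (blockDiagPart A P T) U V, Finset.image_orderEmbOfFin_univ]

lemma det_eq_zero_of_card_ne {κ : Type*} [Fintype κ] [DecidableEq κ] {M : Matrix κ κ R}
    {s t : Finset κ} (hst : s.card ≠ t.card) (hM : ∀ i j, ¬ (i ∈ s ↔ j ∈ t) → M i j = 0) :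
    M.det = 0 := by
  rw [Matrix.det_apply]
  refine Finset.sum_eq_zero fun σ _ => ?_
  obtain ⟨j, hj⟩ : ∃ j, ¬ (σ j ∈ s ↔ j ∈ t) := by
    by_contra! h
    exact hst (Finset.card_bijective σ σ.bijective fun j => (h j).symm).symm
  have prod_eq_zero : ∏ i, M (σ i) i = 0 := Finset.prod_eq_zero (Finset.mem_univ j) (hM _ _ hj)
  rw [prod_eq_zero, smul_zero]

lemma fminor_blockDiagPart_of_card_ne (A : Matrix ι ι R) {P T U V : Finset ι} (hP : P ⊆ U)
    (hT : T ⊆ V) (hPT : P.card ≠ T.card) :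
    fminor (blockDiagPart A P T) U V = 0 := by
  by_cases h : U.card = V.card
  · have card_preimage {X Y : Finset ι} (hY : Y ⊆ X) (hX : X.card = V.card) :
        (Finset.univ.filter (X.orderEmbOfFin hX · ∈ Y)).card = Y.card := by
      rw [← Finset.card_image_of_injective _ (X.orderEmbOfFin hX).injective,
        ← Finset.filter_image (p := (· ∈ Y)), Finset.image_orderEmbOfFin_univ,
        Finset.filter_mem_eq_inter, Finset.inter_eq_right.mpr hY]
    rw [fminor_eq_det_orderEmbOfFin _ h rfl]
    refine det_eq_zero_of_card_ne (s := Finset.univ.filter (U.orderEmbOfFin h · ∈ P))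
      (t := Finset.univ.filter (V.orderEmbOfFin rfl · ∈ T)) ?_ fun i j hij => if_neg ?_
    · rwa [card_preimage hP h, card_preimage hT rfl]
    · simpa using hij
  · exact fminor_of_card_ne _ h

lemma fminor_blockDiagPart (A : Matrix ι ι R) {P Q T V : Finset ι} (hPQ : Disjoint P Q)
    (hTV : Disjoint T V) (hPT : P.card = T.card) (hQV : Q.card = V.card) :
    fminor (blockDiagPart A P T) (P ∪ Q) (T ∪ V) =
      epsSign R P Q * epsSign R T V * (fminor A P T * fminor A Q V) := by
  let p := P.orderEmbOfFin hPT
  let q := Q.orderEmbOfFin hQV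
  let t := T.orderEmbOfFin rfl
  let v := V.orderEmbOfFin rfl
  have hp i : p i ∈ P := P.orderEmbOfFin_mem hPT i
  have ht i : t i ∈ T := T.orderEmbOfFin_mem rfl i
  have hq i : q i ∉ P := hPQ.notMem_of_mem_right_finset (Q.orderEmbOfFin_mem hQV i)
  have hv i : v i ∉ T := hTV.notMem_of_mem_right_finset (V.orderEmbOfFin_mem rfl i)
  have blocks : (blockDiagPart A P T).submatrix (Sum.elim p q) (Sum.elim t v) =
      Matrix.fromBlocks (A.submatrix p t) 0 0 (A.submatrix q v) := by
    ext (i | i) (j | j) <;> simp [blockDiagPart, hp, hq, ht, hv]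
  have det_blocks := det_submatrix_sumElim_eq_epsSign_mul_fminor (blockDiagPart A P T) p t q v
    (fun i j h => hq j (h ▸ hp i)) (fun i j h => hv j (h ▸ ht i))
  rw [blocks, Matrix.det_fromBlocks_zero₂₁] at det_blocks
  simp only [p, q, t, v, Finset.image_orderEmbOfFin_univ, ← fminor_eq_det_orderEmbOfFin]
    at det_blocks
  rw [det_blocks]
  linear_combination -(fminor (blockDiagPart A P T) (P ∪ Q) (T ∪ V)) *
    (epsSign R T V * epsSign R T V * epsSign_mul_self (R := R) P Q +
      epsSign_mul_self (R := R) T V)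

theorem fminor_union_eq_sum_powersetCard (A : Matrix ι ι R) {T U V : Finset ι} (hTV : Disjoint T V)
    (hU : U.card = T.card + V.card) :
    fminor A U (T ∪ V) = ∑ P ∈ U.powersetCard T.card,
      epsSign R P (U \ P) * epsSign R T V * (fminor A P T * fminor A (U \ P) V) := by
  have card_eq : U.card = (T ∪ V).card := hU.trans (Finset.card_union_of_disjoint hTV).symm
  rw [fminor_eq_sum_blockDiagPart A card_eq T,
    ← Finset.sum_subset fun P hP => Finset.mem_powerset.mpr (Finset.mem_powersetCard.mp hP).1]
  · refine Finset.sum_congr rfl fun P hP => ?_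
    obtain ⟨hPU, hPT⟩ := Finset.mem_powersetCard.mp hP
    have hQV : (U \ P).card = V.card := by
      rw [Finset.card_sdiff_of_subset hPU, hU, hPT, Nat.add_sub_cancel_left]
    conv_lhs => rw [← Finset.union_sdiff_of_subset hPU]
    rw [fminor_blockDiagPart A Finset.disjoint_sdiff hTV hPT hQV]
  · intro P hP hP'
    rw [Finset.mem_powersetCard, not_and] at hP'
    have hPU := Finset.mem_powerset.mp hP
    exact fminor_blockDiagPart_of_card_ne A hPU Finset.subset_union_left (hP' hPU)

end Laplace

section ColumnExpansion

variable {κ R : Type*} [DecidableEq κ] [CommRing R]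

/-- The matrix `A` with its columns indexed by `M` replaced by those of `1 - A`,
whose minors interpolate between the two sides of the contraction formula. -/
def oneSubColumns (A : Matrix κ κ R) (M : Finset κ) : Matrix κ κ R :=
  Matrix.of fun i j => if j ∈ M then (1 - A) i j else A i j

lemma det_oneSubColumns [Fintype κ] (A : Matrix κ κ R) (M : Finset κ) :
    (oneSubColumns A M).det = ∑ W ∈ M.powerset, (-1) ^ W.card *
      (A.submatrix (↑) (↑) : Matrix ↥(Mᶜ ∪ W) ↥(Mᶜ ∪ W) R).det := by
  let a : κ → κ → R := Aᵀ.row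
  let b : κ → κ → R := M.piecewise (1 : Matrix κ κ R).row a
  have transpose_eq : (oneSubColumns A M)ᵀ = M.piecewise (-a + b) b := by
    ext j i
    by_cases hj : j ∈ M <;>
      simp [oneSubColumns, a, b, Finset.piecewise, hj, Matrix.one_apply, eq_comm, neg_add_eq_sub]
  have piecewise_eq (W : Finset κ) : W.piecewise (-a) b = W.piecewise
      (fun j => (-1 : R) • (Mᶜ ∪ W).piecewise a (1 : Matrix κ κ R).row j)
      ((Mᶜ ∪ W).piecewise a (1 : Matrix κ κ R).row) := by
    ext j i
    by_cases hj : j ∈ W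
    · simp [Finset.piecewise, hj]
    · by_cases hjM : j ∈ M <;> simp [b, Finset.piecewise, hj, hjM]
  calc (oneSubColumns A M).det
      = Matrix.detRowAlternating.toMultilinearMap (M.piecewise (-a + b) b) := by
        rw [← Matrix.det_transpose, transpose_eq]
        rfl
    _ = ∑ W ∈ M.powerset, Matrix.detRowAlternating.toMultilinearMap (W.piecewise (-a) b) :=
      Matrix.detRowAlternating.toMultilinearMap.map_piecewise_add (-a) b M
    _ = ∑ W ∈ M.powerset, (-1) ^ W.card *
          (Matrix.of ((Mᶜ ∪ W).piecewise a (1 : Matrix κ κ R).row)).det := by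
      refine Finset.sum_congr rfl fun W _ => ?_
      rw [piecewise_eq, MultilinearMap.map_piecewise_smul,
        Finset.prod_const]
      rfl
    _ = _ := by
      refine Finset.sum_congr rfl fun W _ => ?_
      rw [Matrix.det_piecewise_one_eq_submatrix_det, ← Matrix.transpose_submatrix,
        Matrix.det_transpose]

lemma det_submatrix_coe {α : Type*} [Fintype α] [DecidableEq α] (A : Matrix κ κ R)
    {s : Finset κ} {e : α → κ} (he : Function.Injective e) (hs : Finset.univ.image e = s) :
    (A.submatrix (↑) (↑) : Matrix s s R).det = (A.submatrix e e).det := by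
  have mem (a : α) : e a ∈ s := hs ▸ Finset.mem_image_of_mem e (Finset.mem_univ a)
  have bij : Function.Bijective fun a => (⟨e a, mem a⟩ : s) := by
    refine ⟨fun x y h => he (Subtype.ext_iff.mp h), fun ⟨x, hx⟩ => ?_⟩
    obtain ⟨a, -, rfl⟩ := Finset.mem_image.mp (hs ▸ hx)
    exact ⟨a, rfl⟩
  exact (Matrix.det_submatrix_equiv_self (Equiv.ofBijective _ bij) _).symm

end ColumnExpansion

section Contraction

variable {ι R : Type*} [LinearOrder ι] [CommRing R]

lemma det_submatrix_disjSum_eq_epsSign_mul_fminor (A : Matrix ι ι R) {k l : ℕ} {a a' : Fin k ↪o ι}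
    {b : Fin l ↪o ι} (hab : ∀ i j, a i ≠ b j) (hab' : ∀ i j, a' i ≠ b j) (w : Finset (Fin l)) :
    ((A.submatrix (Sum.elim a b) (Sum.elim a' b)).submatrix Subtype.val Subtype.val :
        Matrix (Finset.univ.disjSum w) (Finset.univ.disjSum w) R).det =
      epsSign R (Finset.univ.image a) (w.image b) * epsSign R (Finset.univ.image a') (w.image b) *
        fminor A (Finset.univ.image a ∪ w.image b) (Finset.univ.image a' ∪ w.image b) := by
  let ω := w.orderEmbOfFin rfl
  let ν : Fin w.card ↪o ι := ω.trans b
  have image_ω : Finset.univ.image ω = w := w.image_orderEmbOfFin_univ rfl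
  have image_map : Finset.univ.image (Sum.map (id : Fin k → Fin k) ω) = Finset.univ.disjSum w := by
    conv_rhs => rw [← image_ω]
    ext (i | i) <;> simp
  have image_ν : Finset.univ.image ν = w.image b := by
    conv_rhs => rw [← image_ω, Finset.image_image]
    rfl
  have submatrix_eq : (A.submatrix (Sum.elim a b) (Sum.elim a' b)).submatrix
      (Sum.map id ω) (Sum.map id ω) = A.submatrix (Sum.elim a ν) (Sum.elim a' ν) := by
    ext (i | i) (j | j) <;> rfl
  rw [det_submatrix_coe _ (Function.injective_id.sumMap ω.injective) image_map, submatrix_eq,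
    det_submatrix_sumElim_eq_epsSign_mul_fminor A a a' ν ν (fun i j => hab i (ω j))
      (fun i j => hab' i (ω j)), image_ν]

lemma fminor_oneSubColumns (A : Matrix ι ι R) {S T M : Finset ι} (hST : S.card = T.card)
    (hSM : Disjoint S M) (hTM : Disjoint T M) :
    epsSign R S M * epsSign R T M * fminor (oneSubColumns A M) (S ∪ M) (T ∪ M) =
      ∑ W ∈ M.powerset, (-1) ^ W.card *
        (epsSign R S W * epsSign R T W * fminor A (S ∪ W) (T ∪ W)) := by
  let s := S.orderEmbOfFin hST
  let t := T.orderEmbOfFin rfl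
  let μ := M.orderEmbOfFin rfl
  have s_ne i j : s i ≠ μ j :=
    Finset.disjoint_iff_ne.mp hSM _ (S.orderEmbOfFin_mem hST i) _ (M.orderEmbOfFin_mem rfl j)
  have t_ne i j : t i ≠ μ j :=
    Finset.disjoint_iff_ne.mp hTM _ (T.orderEmbOfFin_mem rfl i) _ (M.orderEmbOfFin_mem rfl j)
  let B := A.submatrix (Sum.elim s μ) (Sum.elim t μ)
  let inrs : Finset (Fin T.card ⊕ Fin M.card) := Finset.univ.image Sum.inr
  have submatrix_eq : (oneSubColumns A M).submatrix (Sum.elim s μ) (Sum.elim t μ) =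
      oneSubColumns B inrs := by
    have ht j : t j ∉ M := hTM.notMem_of_mem_left_finset (T.orderEmbOfFin_mem rfl j)
    have hμ j : μ j ∈ M := M.orderEmbOfFin_mem rfl j
    ext (i | i) (j | j) <;>
      simp [oneSubColumns, B, inrs, ht, hμ, Matrix.one_apply, s_ne, μ.injective.eq_iff]
  have compl_union (w : Finset (Fin M.card)) :
      inrsᶜ ∪ w.image Sum.inr = Finset.univ.disjSum w := by
    ext (i | i) <;> simp [inrs]
  calc epsSign R S M * epsSign R T M * fminor (oneSubColumns A M) (S ∪ M) (T ∪ M)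
      = (oneSubColumns B inrs).det := by
        rw [← submatrix_eq, det_submatrix_sumElim_eq_epsSign_mul_fminor _ s t μ μ s_ne t_ne]
        simp only [s, t, μ, Finset.image_orderEmbOfFin_univ]
    _ = ∑ w : Finset (Fin M.card), (-1) ^ w.card * (epsSign R S (w.image μ) *
          epsSign R T (w.image μ) * fminor A (S ∪ w.image μ) (T ∪ w.image μ)) := by
      rw [det_oneSubColumns, sum_powerset_image Sum.inr_injective, Finset.powerset_univ]
      refine Finset.sum_congr rfl fun w _ => ?_
      rw [compl_union, det_submatrix_disjSum_eq_epsSign_mul_fminor A s_ne t_ne,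
        Finset.card_image_of_injective _ Sum.inr_injective]
      simp only [s, t, Finset.image_orderEmbOfFin_univ]
    _ = _ := by
      conv_rhs => rw [← Finset.image_orderEmbOfFin_univ M rfl, sum_powerset_image μ.injective,
        Finset.powerset_univ]
      refine Finset.sum_congr rfl fun w _ => ?_
      rw [Finset.card_image_of_injective _ μ.injective]

theorem partial_supertrace_eq_top_form_contraction_general (A : Matrix ι ι R) {S T M : Finset ι}
    (hST : S.card = T.card) (hSM : Disjoint S M) (hTM : Disjoint T M) :
    ∑ W ∈ M.powerset, (-1) ^ W.card *
        (epsSign R S W * epsSign R T W * fminor A (S ∪ W) (T ∪ W)) =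
      epsSign R S M * ∑ P ∈ (S ∪ M).powersetCard T.card, epsSign R P ((S ∪ M) \ P) *
        fminor A P T * fminor (1 - A) ((S ∪ M) \ P) M := by
  have fminor_T (P : Finset ι) : fminor (oneSubColumns A M) P T = fminor A P T :=
    fminor_congr fun i _ j hj => if_neg (hTM.notMem_of_mem_left_finset hj)
  have fminor_M (Q : Finset ι) : fminor (oneSubColumns A M) Q M = fminor (1 - A) Q M :=
    fminor_congr fun i _ j hj => if_pos hj
  have card_eq : (S ∪ M).card = T.card + M.card := by
    rw [Finset.card_union_of_disjoint hSM, hST]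
  rw [← fminor_oneSubColumns A hST hSM hTM, mul_assoc,
    fminor_union_eq_sum_powersetCard _ hTM card_eq]
  simp only [fminor_T, fminor_M, Finset.mul_sum]
  refine Finset.sum_congr rfl fun P _ => ?_
  linear_combination (epsSign R S M * epsSign R P ((S ∪ M) \ P) * fminor A P T *
    fminor (1 - A) ((S ∪ M) \ P) M) * epsSign_mul_self (R := R) T M

end Contraction

section Blocks

lemma sum_disjoint_union_eq_sum_powersetCard {ι N : Type*} [Fintype ι] [DecidableEq ι]
    [AddCommMonoid N] (U : Finset ι) (k : ℕ) (f : Finset ι → Finset ι → N) :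
    ∑ p ∈ Finset.univ.filter
        (fun p : Finset ι × Finset ι => Disjoint p.1 p.2 ∧ p.1 ∪ p.2 = U ∧ p.1.card = k),
      f p.1 p.2 = ∑ P ∈ U.powersetCard k, f P (U \ P) := by
  have sdiff_eq {P Q : Finset ι} (h : Disjoint P Q) : (P ∪ Q) \ P = Q := by
    rw [Finset.union_sdiff_left, h.symm.sdiff_eq_left]
  refine Finset.sum_bij' (fun p _ => p.1) (fun P _ => (P, U \ P)) ?_ ?_ ?_ ?_ ?_
  · rintro ⟨P, Q⟩ h
    obtain ⟨-, rfl, hk⟩ := (Finset.mem_filter.mp h).2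
    exact Finset.mem_powersetCard.mpr ⟨Finset.subset_union_left, hk⟩
  · intro P hP
    obtain ⟨hPU, hk⟩ := Finset.mem_powersetCard.mp hP
    exact Finset.mem_filter.mpr ⟨Finset.mem_univ _, Finset.disjoint_sdiff,
      Finset.union_sdiff_of_subset hPU, hk⟩
  · rintro ⟨P, Q⟩ h
    obtain ⟨hPQ, rfl, -⟩ := (Finset.mem_filter.mp h).2
    exact Prod.ext rfl (sdiff_eq hPQ)
  · exact fun _ _ => rfl
  · rintro ⟨P, Q⟩ h
    obtain ⟨hPQ, rfl, -⟩ := (Finset.mem_filter.mp h).2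
    rw [sdiff_eq hPQ]

variable {n m : ℕ}

lemma inlL_lt_inrL (i : Fin n) (j : Fin m) : inlL i < (inrL j : SumLexIdx n m) :=
  Sum.Lex.inl_lt_inr i j

lemma disjoint_image_inlL_image_inrL (S : Finset (Fin n)) (W : Finset (Fin m)) :
    Disjoint (S.image inlL : Finset (SumLexIdx n m)) (W.image inrL) :=
  Finset.disjoint_left.mpr <| by simp [(inlL_lt_inrL _ _).ne']

lemma epsSign_image_inlL_image_inrL {R : Type*} [CommRing R] (S : Finset (Fin n))
    (W : Finset (Fin m)) : epsSign R (S.image inlL : Finset (SumLexIdx n m)) (W.image inrL) = 1 :=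
  epsSign_eq_one <| by simp [inlL_lt_inrL]

lemma inlL_injective : Function.Injective (inlL : Fin n → SumLexIdx n m) :=
  toLex.injective.comp Sum.inl_injective

lemma inrL_injective : Function.Injective (inrL : Fin m → SumLexIdx n m) :=
  toLex.injective.comp Sum.inr_injective

theorem sum_fminor_image_inlL_union_image_inrL {R : Type*} [CommRing R]
    (A : Matrix (SumLexIdx n m) (SumLexIdx n m) R) {S T : Finset (Fin n)} (hST : S.card = T.card) :
    ∑ W : Finset (Fin m), (-1) ^ W.card *
        fminor A (S.image inlL ∪ W.image inrL) (T.image inlL ∪ W.image inrL) =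
      ∑ P ∈ (S.image inlL ∪ Finset.univ.image inrL).powersetCard T.card,
        epsSign R P ((S.image inlL ∪ Finset.univ.image inrL) \ P) * fminor A P (T.image inlL) *
          fminor (1 - A) ((S.image inlL ∪ Finset.univ.image inrL) \ P)
            (Finset.univ.image inrL) := by
  have card_inlL (X : Finset (Fin n)) : (X.image (inlL (m := m))).card = X.card :=
    X.card_image_of_injective inlL_injective
  have contraction := partial_supertrace_eq_top_form_contraction_general A
    ((card_inlL S).trans (hST.trans (card_inlL T).symm))
    (disjoint_image_inlL_image_inrL S Finset.univ) (disjoint_image_inlL_image_inrL T Finset.univ)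
  simp only [sum_powerset_image inrL_injective, Finset.powerset_univ, one_mul, card_inlL,
    epsSign_image_inlL_image_inrL, Finset.card_image_of_injective _ inrL_injective] at contraction
  convert contraction

end Blocks

/-- The partial supertrace (over the right block) of the exterior algebra action of a
matrix `A` indexed by `Fin n ⊕ Fin m`, evaluated on minors `(S,T)` of the left block,
equals a contraction against the top form of the right block transported by `1 - A`. -/
theorem partial_supertrace_eq_top_form_contraction
    {R : Type*} [CommRing R] {n m : ℕ}
    (A : Matrix (Fin n ⊕ Fin m) (Fin n ⊕ Fin m) R)
    (k : ℕ) (S T : Finset (Fin n)) (hS : S.card = k) (hT : T.card = k) :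
    ∑ W : Finset (Fin m), (-1 : R) ^ W.card *
        fminor (toLexMat A) (S.image inlL ∪ W.image inrL)
          (T.image inlL ∪ W.image inrL)
      = ∑ p ∈ Finset.univ.filter
            (fun p : Finset (SumLexIdx n m) × Finset (SumLexIdx n m) =>
              Disjoint p.1 p.2 ∧
              p.1 ∪ p.2 = S.image inlL ∪ (Finset.univ : Finset (Fin m)).image inrL ∧
              p.1.card = k),
          epsSign R p.1 p.2 *
            fminor (toLexMat A) p.1 (T.image inlL) *
            fminor (1 - toLexMat A) p.2
              ((Finset.univ : Finset (Fin m)).image inrL) := by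
  subst hT
  rw [sum_fminor_image_inlL_union_image_inrL _ hS]
  exact (sum_disjoint_union_eq_sum_powersetCard _ _ fun P Q => epsSign R P Q *
    fminor (toLexMat A) P (T.image inlL) * fminor (1 - toLexMat A) Q (Finset.univ.image inrL)).symm
end

section
/- Let K be a field and let B = Matrix.fromBlocks H J K' L be an (n+m)×(n+m) matrix over K with H of size n×n and L of size m×m invertible, and let D = H − J·L⁻¹·K' be the Schur complement of L in B. Then for every k and all finsets S, T ⊆ Fin n with S.card = T.card = k, one has ∑_{(R₁,R₂)} ε(R₁,R₂) · det (1−B)[R₁, T̂] · det B[R₂, M̂] = det L · det (1−D)[S,T], where the sum ranges over all pairs of disjoint finsets R₁, R₂ of Fin n ⊕ Fin m with R₁ ∪ R₂ = Ŝ ∪ M̂ and R₁.card = k. -/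
open Matrix

/-!
Let `C` be the matrix with rows `Ŝ ∪ M̂` whose columns are the columns `T̂` of `1 - B` followed by
the columns `M̂` of `B`. Group the Leibniz expansion of `det C` by the sets `R₁`, `R₂` of rows
matched to the two blocks of columns. Each group is a coset of the permutations preserving the
blocks, so it contributes a product of two minors, up to the sign of the coset representative that
is increasing on each block. The inversions of that shuffle are exactly the pairs counted by
`ε(R₁, R₂)`, so the sum is `det C`. The lower right block of `C` is `L`, and the Schur complement of
`L` in `C` is the submatrix of `(1 - H) - J L⁻¹ (-K') = 1 - D` with rows `S` and columns `T`.
-/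

open Equiv Finset Function

section Sign

variable {ι : Type*} [LinearOrder ι]

theorem sign_eq_neg_one_pow_card_inversions {γ : Type*} [Fintype γ] [DecidableEq γ] {u : γ → ι}
    (hu : Injective u) (σ : Perm γ) :
    Perm.sign σ = (-1) ^ #{p : γ × γ | u p.1 < u p.2 ∧ u (σ p.2) < u (σ p.1)} := by
  obtain ⟨e, he⟩ : ∃ e : Fin (Fintype.card γ) ≃ γ, StrictMono (u ∘ e) :=
    let e₀ := (Fintype.equivFin γ).symm
    ⟨(Tuple.sort (u ∘ e₀)).trans e₀, (Tuple.monotone_sort (u ∘ e₀)).strictMono_of_injective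
      (hu.comp ((Tuple.sort (u ∘ e₀)).trans e₀).injective)⟩
  rw [← Perm.sign_permCongr e.symm, Perm.sign_eq_prod_prod_Ioi, ← prod_const, prod_filter,
    ← (e.prodCongr e).prod_comp, Fintype.prod_prod_type]
  refine prod_congr rfl fun i _ => ?_
  rw [← filter_lt_eq_Ioi, prod_filter]
  refine prod_congr rfl fun j _ => ?_
  have lt_iff (a b : Fin _) : u (e a) < u (e b) ↔ a < b := he.lt_iff_lt
  have hσ (a : Fin _) : σ (e a) = e (e.symm.permCongr σ a) := by simp
  simp only [Equiv.prodCongr_apply, Prod.map_apply, hσ, lt_iff]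
  grind [Equiv.injective]

theorem epsSign_image_image {R α β : Type*} [CommRing R] [Fintype α] [Fintype β]
    {f : α → ι} {g : β → ι} (hf : Injective f) (hg : Injective g) :
    epsSign R (univ.image f) (univ.image g) = (-1) ^ #{p : α × β | g p.2 < f p.1} := by
  rw [epsSign, ← prodMap_image_product, filter_image, univ_product_univ,
    card_image_of_injective _ (hf.prodMap hg)]
  rfl

theorem epsSign_eq_sign {R α β : Type*} [CommRing R] [LinearOrder α] [LinearOrder β] [Fintype α]
    [Fintype β] {u : α ⊕ β → ι} (hu : StrictMono (u ∘ ofLex : α ⊕ₗ β → ι)) {τ : Perm (α ⊕ β)}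
    (hl : StrictMono (u ∘ τ ∘ Sum.inl)) (hr : StrictMono (u ∘ τ ∘ Sum.inr)) :
    epsSign R (univ.image (u ∘ τ ∘ Sum.inl)) (univ.image (u ∘ τ ∘ Sum.inr)) =
      (Perm.sign τ : ℤ) := by
  have hinj : Injective u := hu.injective.comp toLex.injective
  have lt_iff (x y : α ⊕ β) : u x < u y ↔ toLex x < toLex y := hu.lt_iff_lt (a := toLex x)
  have inversions_eq : ({p | u p.1 < u p.2 ∧ u (τ p.2) < u (τ p.1)} : Finset _) =
      image (Prod.map Sum.inl Sum.inr)
        ({p | u (τ (Sum.inr p.2)) < u (τ (Sum.inl p.1))} : Finset (α × β)) := by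
    ext ⟨x | x, y | y⟩
    · simpa [lt_iff (Sum.inl _)] using fun h => (hl h).le
    · simp [lt_iff (Sum.inl _)]
    · simp [lt_iff (Sum.inr _)]
    · simpa [lt_iff (Sum.inr _)] using fun h => (hr h).le
  rw [epsSign_image_image hl.injective hr.injective,
    sign_eq_neg_one_pow_card_inversions hinj τ,
    inversions_eq, card_image_of_injective _ (Sum.inl_injective.prodMap Sum.inr_injective)]
  simp

end Sign

section BlockPermutations

theorem exists_perm_comp_eq {γ ι : Type*} {u v : γ → ι} (hu : Injective u) (hv : Injective v)
    (h : Set.range v = Set.range u) : ∃ τ : Perm γ, u ∘ τ = v :=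
  ⟨(ofInjective v hv).trans ((Equiv.setCongr h).trans (ofInjective u hu).symm), by
    ext x; simp [apply_ofInjective_symm hu]⟩

variable {α β ι : Type*} [Fintype α] [Fintype β] [DecidableEq ι]

/-- The pair `(R₁, R₂)` of row sets that an enumeration `u` of the rows assigns to the two blocks
of columns. The Leibniz terms `σ` of a determinant are grouped by `blockImages (u ∘ σ)`. -/
def blockImages (u : α ⊕ β → ι) : Finset ι × Finset ι :=
  (univ.image (u ∘ Sum.inl), univ.image (u ∘ Sum.inr))

theorem disjoint_blockImages {u : α ⊕ β → ι} (hu : Injective u) :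
    Disjoint (blockImages u).1 (blockImages u).2 := by
  simp [blockImages, disjoint_left, hu.eq_iff]

theorem blockImages_union (u : α ⊕ β → ι) :
    (blockImages u).1 ∪ (blockImages u).2 = univ.image u := by
  ext x
  simp [blockImages, Sum.exists]

theorem card_blockImages_fst {u : α ⊕ β → ι} (hu : Injective u) :
    #(blockImages u).1 = Fintype.card α :=
  card_image_of_injective _ (hu.comp Sum.inl_injective)

theorem blockImages_comp_eq_iff {u : α ⊕ β → ι} (hu : Injective u) {σ τ : Perm (α ⊕ β)} :
    blockImages (u ∘ σ) = blockImages (u ∘ τ) ↔ ∃ q, τ * Perm.sumCongrHom α β q = σ := by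
  constructor
  · intro h
    obtain ⟨q, hq⟩ : τ⁻¹ * σ ∈ (Perm.sumCongrHom α β).range := by
      refine Perm.mem_sumCongrHom_range_of_perm_mapsTo_inl ?_
      rintro _ ⟨i, rfl⟩
      have mem : u (σ (Sum.inl i)) ∈ (blockImages (u ∘ τ)).1 :=
        h ▸ mem_image_of_mem _ (mem_univ i)
      obtain ⟨j, -, hj⟩ := mem_image.1 mem
      exact ⟨j, Perm.eq_inv_iff_eq.2 (hu hj)⟩
    exact ⟨q, mul_eq_of_eq_inv_mul hq⟩
  · rintro ⟨⟨α', β'⟩, rfl⟩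
    refine Prod.ext ?_ ?_ <;> ext x
    · simpa [blockImages] using (α'.surjective.exists (p := fun a => u (τ (Sum.inl a)) = x)).symm
    · simpa [blockImages] using (β'.surjective.exists (p := fun a => u (τ (Sum.inr a)) = x)).symm

end BlockPermutations

section Laplace

variable {R ι : Type*} [CommRing R] [LinearOrder ι]

theorem sum_sign_mul_prod_mul_sumCongr {α β : Type*} [Fintype α] [Fintype β] [DecidableEq α]
    [DecidableEq β] (M : Matrix (α ⊕ β) (α ⊕ β) R) (τ : Perm (α ⊕ β)) :
    ∑ q, (Perm.sign (τ * Perm.sumCongrHom α β q) : ℤ) * ∏ x, M ((τ * Perm.sumCongrHom α β q) x) x =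
      (Perm.sign τ : ℤ) * (M.submatrix (τ ∘ Sum.inl) Sum.inl).det *
        (M.submatrix (τ ∘ Sum.inr) Sum.inr).det := by
  rw [det_apply', det_apply', mul_assoc, sum_mul_sum, ← Fintype.sum_prod_type', mul_sum]
  refine sum_congr rfl fun q _ => ?_
  simp only [Fintype.prod_sum_type, Perm.sign_mul, Perm.sign_sumCongr, Perm.mul_apply,
    Perm.sumCongrHom_apply, Perm.sumCongr_apply, Sum.map_inl, Sum.map_inr, submatrix_apply,
    Function.comp_apply]
  push_cast
  ring

theorem exists_shuffle {k m : ℕ} {u : Fin k ⊕ Fin m → ι}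
    (hu : Injective u) {R₁ R₂ : Finset ι} (hdisj : Disjoint R₁ R₂)
    (hunion : R₁ ∪ R₂ = univ.image u) (hcard : #R₁ = k) :
    ∃ τ : Perm (Fin k ⊕ Fin m), StrictMono (u ∘ τ ∘ Sum.inl) ∧ StrictMono (u ∘ τ ∘ Sum.inr) ∧
      blockImages (u ∘ τ) = (R₁, R₂) := by
  have hcard₂ : #R₂ = m := by
    have card_add := card_union_of_disjoint hdisj
    rw [hunion, card_image_of_injective _ hu, hcard] at card_add
    simpa using card_add.symm
  let r₁ := R₁.orderEmbOfFin hcard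
  let r₂ := R₂.orderEmbOfFin hcard₂
  have hr : Injective (Sum.elim r₁ r₂) := r₁.injective.sumElim r₂.injective fun i j =>
    disjoint_iff_ne.1 hdisj _ (R₁.orderEmbOfFin_mem hcard i) _ (R₂.orderEmbOfFin_mem hcard₂ j)
  have hrange : Set.range (Sum.elim r₁ r₂) = Set.range u := by
    simpa [r₁, r₂, Set.Sum.elim_range] using congrArg ((↑) : Finset ι → Set ι) hunion
  obtain ⟨τ, hτ⟩ := exists_perm_comp_eq hu hr hrange
  refine ⟨τ, ?_⟩
  simp only [← comp_assoc, blockImages, hτ, Sum.elim_comp_inl, Sum.elim_comp_inr]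
  exact ⟨r₁.strictMono, r₂.strictMono, by simp [r₁, r₂]⟩

theorem fminor_image_image {k : ℕ} (A : Matrix ι ι R) {s t : Fin k → ι} (hs : StrictMono s)
    (ht : StrictMono t) : fminor A (univ.image s) (univ.image t) = (A.submatrix s t).det := by
  have card_image {f : Fin k → ι} (hf : StrictMono f) : #(univ.image f) = k := by
    simp [card_image_of_injective _ hf.injective]
  have enum_image {f : Fin k → ι} (hf : StrictMono f) {l : ℕ} (h : #(univ.image f) = l)
      (i : Fin l) :
      (univ.image f).orderEmbOfFin h i = f (i.cast (h.symm.trans (card_image hf))) := by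
    obtain rfl := h.symm.trans (card_image hf)
    exact congrFun (orderEmbOfFin_unique h (fun i => mem_image_of_mem f (mem_univ i)) hf).symm i
  rw [fminor, dif_pos ((card_image hs).trans (card_image ht).symm),
    ← det_submatrix_equiv_self (finCongr (card_image ht)) (A.submatrix s t)]
  simp only [enum_image hs, enum_image ht]
  rfl

theorem sum_epsSign_mul_fminor_mul_fminor [Fintype ι] {k m : ℕ} (A B : Matrix ι ι R)
    {u : Fin k ⊕ Fin m → ι} (hu : StrictMono (u ∘ ofLex : Fin k ⊕ₗ Fin m → ι))
    {t₁ : Fin k → ι} {t₂ : Fin m → ι} (ht₁ : StrictMono t₁) (ht₂ : StrictMono t₂) :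
    ∑ p : Finset ι × Finset ι with
        Disjoint p.1 p.2 ∧ p.1 ∪ p.2 = univ.image u ∧ #p.1 = k,
      epsSign R p.1 p.2 * fminor A p.1 (univ.image t₁) * fminor B p.2 (univ.image t₂) =
    (fromCols (A.submatrix u t₁) (B.submatrix u t₂)).det := by
  have hinj : Injective u := hu.injective.comp toLex.injective
  have maps_to (σ : Perm (Fin k ⊕ Fin m)) : blockImages (u ∘ σ) ∈ ({p : Finset ι × Finset ι |
      Disjoint p.1 p.2 ∧ p.1 ∪ p.2 = univ.image u ∧ #p.1 = k} : Finset _) := by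
    have hσ := hinj.comp σ.injective
    simp only [mem_filter_univ, blockImages_union, card_blockImages_fst hσ, Fintype.card_fin,
      and_true]
    exact ⟨disjoint_blockImages hσ, by simp [← image_image]⟩
  rw [det_apply', ← sum_fiberwise_of_maps_to fun σ _ => maps_to σ]
  refine sum_congr rfl fun ⟨R₁, R₂⟩ hR => ?_
  obtain ⟨hdisj, hunion, hcard⟩ := mem_filter_univ _ |>.1 hR
  obtain ⟨τ, hl, hr, hτ⟩ := exists_shuffle hinj hdisj hunion hcard
  have fiber_eq : ({σ | blockImages (u ∘ σ) = (R₁, R₂)} : Finset (Perm (Fin k ⊕ Fin m))) =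
      univ.image fun q => τ * Perm.sumCongrHom (Fin k) (Fin m) q := by
    ext σ
    simp only [← hτ, blockImages_comp_eq_iff hinj, mem_filter_univ, mem_image, mem_univ, true_and]
  rw [fiber_eq, sum_image fun _ _ _ _ h => Perm.sumCongrHom_injective (mul_left_cancel h),
    sum_sign_mul_prod_mul_sumCongr, ← epsSign_eq_sign hu hl hr]
  obtain ⟨rfl, rfl⟩ := Prod.ext_iff.1 hτ
  exact congrArg₂ _ (congrArg _ (fminor_image_image A hl ht₁)) (fminor_image_image B hr ht₂)

end Laplace

theorem det_fromBlocks_submatrix {l m p q R : Type*} [CommRing R] [Fintype l] [DecidableEq l]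
    [Fintype m] [DecidableEq m] (A : Matrix p q R) (B : Matrix p m R) (C : Matrix m q R)
    {D : Matrix m m R} (hD : IsUnit D.det) (s : l → p) (t : l → q) :
    (fromBlocks (A.submatrix s t) (B.submatrix s id) (C.submatrix id t) D).det =
      D.det * ((A - B * D⁻¹ * C).submatrix s t).det := by
  let := invertibleOfIsUnitDet D hD
  rw [det_fromBlocks₂₂, invOf_eq_nonsing_inv]
  rfl

theorem strictMono_toLex_sumMap {α β γ δ : Type*} [Preorder α] [Preorder β] [Preorder γ]
    [Preorder δ] {f : α → γ} {g : β → δ} (hf : StrictMono f) (hg : StrictMono g) :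
    StrictMono (toLex ∘ Sum.map f g ∘ ofLex : α ⊕ₗ β → γ ⊕ₗ δ) := by
  rintro (i | i) (j | j) hij
  · exact Sum.Lex.inl_lt_inl_iff.2 (hf (Sum.Lex.inl_lt_inl_iff.1 hij))
  · exact Sum.Lex.inl_lt_inr _ _
  · exact (Sum.Lex.not_inr_lt_inl hij).elim
  · exact Sum.Lex.inr_lt_inr_iff.2 (hg (Sum.Lex.inr_lt_inr_iff.1 hij))

theorem inlL_strictMono {n m : ℕ} : StrictMono (inlL : Fin n → SumLexIdx n m) :=
  Sum.Lex.inl_strictMono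

theorem inrL_strictMono {n m : ℕ} : StrictMono (inrL : Fin m → SumLexIdx n m) :=
  Sum.Lex.inr_strictMono

theorem one_sub_toLexMat {n m : ℕ} {R : Type*} [CommRing R]
    (A : Matrix (Fin n ⊕ Fin m) (Fin n ⊕ Fin m) R) : 1 - toLexMat A = toLexMat (1 - A) := by
  ext i j
  simp [toLexMat, one_apply]

theorem sum_epsSign_mul_fminor_toLexMat {n m k : ℕ} {R : Type*} [CommRing R]
    (A B : Matrix (Fin n ⊕ Fin m) (Fin n ⊕ Fin m) R) {S T : Finset (Fin n)} (hS : #S = k)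
    (hT : #T = k) :
    ∑ p : Finset (SumLexIdx n m) × Finset (SumLexIdx n m) with
        Disjoint p.1 p.2 ∧ p.1 ∪ p.2 = S.image inlL ∪ univ.image inrL ∧ #p.1 = k,
      epsSign R p.1 p.2 * fminor (toLexMat A) p.1 (T.image inlL) *
        fminor (toLexMat B) p.2 (univ.image inrL) =
      (fromBlocks (A.toBlocks₁₁.submatrix (S.orderEmbOfFin hS) (T.orderEmbOfFin hT))
        (B.toBlocks₁₂.submatrix (S.orderEmbOfFin hS) id)
        (A.toBlocks₂₁.submatrix id (T.orderEmbOfFin hT)) B.toBlocks₂₂).det := by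
  set s := S.orderEmbOfFin hS
  set t := T.orderEmbOfFin hT
  let u : Fin k ⊕ Fin m → SumLexIdx n m := toLex ∘ Sum.map s id
  have image_u : univ.image u = S.image inlL ∪ univ.image inrL := by
    have image_s : univ.image s = S := image_orderEmbOfFin_univ S hS
    ext x
    simp [u, ← image_s, Sum.exists, inlL, inrL]
  have image_t : univ.image (inlL ∘ t) = T.image (inlL (m := m)) := by
    rw [← image_image, image_orderEmbOfFin_univ]
  have blocks : fromCols ((toLexMat A).submatrix u (inlL ∘ t)) ((toLexMat B).submatrix u inrL) =
      fromBlocks (A.toBlocks₁₁.submatrix s t) (B.toBlocks₁₂.submatrix s id)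
        (A.toBlocks₂₁.submatrix id t) B.toBlocks₂₂ := by
    ext (i | i) (j | j) <;> rfl
  rw [← image_u, ← image_t, ← blocks]
  convert sum_epsSign_mul_fminor_mul_fminor (toLexMat A) (toLexMat B) (u := u)
    (strictMono_toLex_sumMap s.strictMono strictMono_id) (inlL_strictMono.comp t.strictMono)
    inrL_strictMono

theorem contraction_eq_det_mul_minor_one_sub_schur_general
    {R : Type*} [CommRing R] {n m : ℕ}
    (H : Matrix (Fin n) (Fin n) R) (J : Matrix (Fin n) (Fin m) R)
    (K' : Matrix (Fin m) (Fin n) R) (L : Matrix (Fin m) (Fin m) R)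
    (hL : IsUnit L.det)
    (k : ℕ) (S T : Finset (Fin n)) (hS : S.card = k) (hT : T.card = k) :
    ∑ p ∈ Finset.univ.filter
          (fun p : Finset (SumLexIdx n m) × Finset (SumLexIdx n m) =>
            Disjoint p.1 p.2 ∧
            p.1 ∪ p.2 = S.image inlL ∪ (Finset.univ : Finset (Fin m)).image inrL ∧
            p.1.card = k),
        epsSign R p.1 p.2 *
          fminor (1 - toLexMat (Matrix.fromBlocks H J K' L)) p.1 (T.image inlL) *
          fminor (toLexMat (Matrix.fromBlocks H J K' L)) p.2
            ((Finset.univ : Finset (Fin m)).image inrL)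
      = L.det * fminor (1 - (H - J * L⁻¹ * K')) S T := by
  have schur : 1 - H - J * L⁻¹ * -K' = 1 - (H - J * L⁻¹ * K') := by
    rw [Matrix.mul_neg, sub_neg_eq_add, sub_add]
  have one_sub_blocks : 1 - fromBlocks H J K' L = fromBlocks (1 - H) (-J) (-K') (1 - L) := by
    rw [← fromBlocks_one, sub_eq_add_neg, fromBlocks_neg, fromBlocks_add]
    simp only [sub_eq_add_neg, zero_add]
  rw [one_sub_toLexMat, sum_epsSign_mul_fminor_toLexMat _ _ hS hT, one_sub_blocks]
  simp only [toBlocks_fromBlocks₁₁, toBlocks_fromBlocks₁₂, toBlocks_fromBlocks₂₁,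
    toBlocks_fromBlocks₂₂]
  rw [det_fromBlocks_submatrix _ _ _ hL, schur,
    ← fminor_image_image _ (OrderEmbedding.strictMono _) (OrderEmbedding.strictMono _),
    image_orderEmbOfFin_univ, image_orderEmbOfFin_univ]

/-- For `B = fromBlocks H J K' L` with `L` invertible and Schur complement
`D = H - J L⁻¹ K'`, the contraction of the exterior action of `1 - B` against the
top form of the right block transported by `B` equals `det L` times the minor of
`1 - D`. -/
theorem contraction_eq_det_mul_minor_one_sub_schur
    {K : Type*} [Field K] {n m : ℕ}
    (H : Matrix (Fin n) (Fin n) K) (J : Matrix (Fin n) (Fin m) K)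
    (K' : Matrix (Fin m) (Fin n) K) (L : Matrix (Fin m) (Fin m) K)
    (hL : IsUnit L.det)
    (k : ℕ) (S T : Finset (Fin n)) (hS : S.card = k) (hT : T.card = k) :
    ∑ p ∈ Finset.univ.filter
          (fun p : Finset (SumLexIdx n m) × Finset (SumLexIdx n m) =>
            Disjoint p.1 p.2 ∧
            p.1 ∪ p.2 = S.image inlL ∪ (Finset.univ : Finset (Fin m)).image inrL ∧
            p.1.card = k),
        epsSign K p.1 p.2 *
          fminor (1 - toLexMat (Matrix.fromBlocks H J K' L)) p.1 (T.image inlL) *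
          fminor (toLexMat (Matrix.fromBlocks H J K' L)) p.2
            ((Finset.univ : Finset (Fin m)).image inrL)
      = L.det * fminor (1 - (H - J * L⁻¹ * K')) S T :=
  contraction_eq_det_mul_minor_one_sub_schur_general H J K' L hL k S T hS hT
end
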